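/- Let x₁, x₂, x₃, x₄ be four points in ℝ³ not all lying in one plane, write r_{i,j} = dist(x_i, x_j), and let V denote the volume of the tetrahedron with vertices x₁, x₂, x₃, x₄ (i.e., the Lebesgue measure of the convex hull of {x₁, x₂, x₃, x₄}). Then 288·V² ≤ 4·d₃(r_{1,2}·r_{3,4}, r_{1,3}·r_{2,4}, r_{1,4}·r_{2,3}), with equality if and only if the tetrahedron is isosceles, i.e., r_{1,2} = r_{3,4}, r_{1,3} = r_{2,4}, and r_{1,4} = r_{2,3}. -/

import Mathlib

/-- `d₃(a,b,c) = (a+b-c)(a+c-b)(b+c-a)`. -/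
def d3 (a b c : ℝ) : ℝ := (a + b - c) * (a + c - b) * (b + c - a)

/-!
Let `o` be the circumcenter, `ρ` the squared circumradius, `p = r₁₂r₃₄`, `q = r₁₃r₂₄`,
`s = r₁₄r₂₃`, and `D = (6V)²`. Two facts are combined.

* Crelle's formula: `p, q, s` are the sides of a triangle of area `6V√ρ`, so Heron's formula gives
  `(p + q + s) d₃(p, q, s) = 16 ρ D` (`crelle`). It is obtained from `rᵢⱼ² = 2ρ - 2⟪xᵢ - o, xⱼ - o⟫`
  and the vanishing of the Gram determinant of the four vectors `xᵢ - o` in a space of dimension 3.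
* `16 ρ - ∑ rᵢⱼ² = ‖∑ (xᵢ - o)‖²` (`sum_sq_eq`), whence `8 ρ - (p + q + s)` is half of
  `‖∑ (xᵢ - o)‖² + (r₁₂ - r₃₄)² + (r₁₃ - r₂₄)² + (r₁₄ - r₂₃)²`.

Since `288 V² = 8 D`, together they give
`(p + q + s) (4 d₃(p, q, s) - 288 V²) = 8 D (8 ρ - (p + q + s)) ≥ 0`. As `D > 0`, equality forces
opposite edges to be equal; conversely, in an isosceles tetrahedron the circumcenter is the
centroid (`sum_eq_zero_of_isosceles`), so the right-hand side vanishes.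

The relation `V = |det| / 6` (`volume_tetrahedron`) is proved by viewing the tetrahedron as an
affine image of the corner simplex, whose volume is `1 / n!` by slicing (`volume_corner`).
-/

open MeasureTheory RealInnerProductSpace

/-- Four vectors in dimension 3 are linearly dependent, so their Gram determinant vanishes. -/
theorem gram_four_eq_zero (y : Fin 4 → Fin 3 → ℝ) :
    (Matrix.of fun i j => y i ⬝ᵥ y j).det = 0 := by
  have h : (Matrix.of fun i j => y i ⬝ᵥ y j) = Matrix.of y * (Matrix.of y).transpose := by
    ext i j
    simp [Matrix.mul_apply, dotProduct]
  obtain ⟨v, hv, hv0⟩ : ∃ v ≠ 0, Matrix.vecMul v (Matrix.of y) = 0 := by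
    have : ¬ LinearIndependent ℝ y := fun h => by
      have := h.fintype_card_le_finrank
      simp at this
    rw [Fintype.not_linearIndependent_iff] at this
    obtain ⟨g, hg, i, hi⟩ := this
    refine ⟨g, fun h => hi (by simp [h]), ?_⟩
    rw [Matrix.vecMul_eq_sum]
    exact hg
  rw [h]
  exact Matrix.exists_vecMul_eq_zero_iff.mp
    ⟨v, hv, by rw [← Matrix.vecMul_vecMul, hv0, Matrix.zero_vecMul]⟩

/-- The algebraic form of Crelle's formula. Here `a, …, f` are the inner products of four vectors of
squared length `ρ`, indexed by the pairs `12, 13, 14, 23, 24, 34`, and `A, …, F` are the squared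
distances. The matrix on the right is the Gram matrix of the edge vectors at the fourth vertex,
written through squared distances by the law of cosines. -/
theorem crelle_gram (ρ a b c d e f : ℝ)
    (h : (!![ρ, a, b, c; a, ρ, d, e; b, d, ρ, f; c, e, f, ρ] : Matrix (Fin 4) (Fin 4) ℝ).det = 0)
    (A B C D E F : ℝ) (hA : A = 2 * ρ - 2 * a) (hB : B = 2 * ρ - 2 * b) (hC : C = 2 * ρ - 2 * c)
    (hD : D = 2 * ρ - 2 * d) (hE : E = 2 * ρ - 2 * e) (hF : F = 2 * ρ - 2 * f) :
    2 * (A * F) * (B * E) + 2 * (A * F) * (C * D) + 2 * (B * E) * (C * D)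
      - (A * F) ^ 2 - (B * E) ^ 2 - (C * D) ^ 2 =
    16 * ρ * (!![C, (C + E - A) / 2, (C + F - B) / 2; (C + E - A) / 2, E, (E + F - D) / 2;
      (C + F - B) / 2, (E + F - D) / 2, F] : Matrix (Fin 3) (Fin 3) ℝ).det := by
  subst hA hB hC hD hE hF
  simp [Matrix.det_succ_row_zero, Fin.sum_univ_succ, Fin.succAbove] at h ⊢
  linear_combination (-16) * h

/-- Volume of the corner simplex `{x ≥ 0, ∑ x ≤ s}`. -/
theorem volume_corner (n : ℕ) : ∀ s : ℝ, 0 ≤ s →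
    volume {x : Fin n → ℝ | (∀ i, 0 ≤ x i) ∧ ∑ i, x i ≤ s} =
      ENNReal.ofReal (s ^ n / n.factorial) := by
  induction n with
  | zero =>
    intro s hs
    simp [hs, volume_pi]
  | succ n ih =>
    intro s hs
    have hm : MeasurableSet {p : ℝ × (Fin n → ℝ) |
        (0 ≤ p.1 ∧ ∀ i, 0 ≤ p.2 i) ∧ p.1 + ∑ i, p.2 i ≤ s} := by
      refine IsClosed.measurableSet ?_
      simp only [Set.ofPred_and, Set.ofPred_forall]
      refine IsClosed.inter (IsClosed.inter ?_ (isClosed_iInter fun i => ?_)) ?_ <;>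
        exact isClosed_le (by fun_prop) (by fun_prop)
    have h1 := (volume_preserving_piFinSuccAbove (fun _ : Fin (n + 1) => ℝ) 0).measure_preimage
      hm.nullMeasurableSet
    have h2 : (MeasurableEquiv.piFinSuccAbove (fun _ : Fin (n + 1) => ℝ) 0) ⁻¹'
        {p : ℝ × (Fin n → ℝ) | (0 ≤ p.1 ∧ ∀ i, 0 ≤ p.2 i) ∧ p.1 + ∑ i, p.2 i ≤ s} =
        {x : Fin (n + 1) → ℝ | (∀ i, 0 ≤ x i) ∧ ∑ i, x i ≤ s} := by
      ext x
      simp [MeasurableEquiv.piFinSuccAbove, Fin.forall_fin_succ, Fin.sum_univ_succ, Fin.tail]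
    rw [h2] at h1
    rw [h1, Measure.volume_eq_prod, Measure.prod_apply hm]
    -- The slice at height `t` is the `n`-dimensional corner simplex of size `s - t`.
    have h3 : ∀ t : ℝ, volume (Prod.mk t ⁻¹' {p : ℝ × (Fin n → ℝ) |
        (0 ≤ p.1 ∧ ∀ i, 0 ≤ p.2 i) ∧ p.1 + ∑ i, p.2 i ≤ s}) =
        (Set.Icc 0 s).indicator (fun t => ENNReal.ofReal ((s - t) ^ n / n.factorial)) t := by
      intro t
      by_cases ht : t ∈ Set.Icc 0 s
      · rw [Set.indicator_of_mem ht, ← ih (s - t) (by linarith [ht.2])]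
        congr 1
        ext x
        simp [ht.1, le_sub_iff_add_le']
      · rw [Set.indicator_of_notMem ht]
        convert measure_empty (μ := (volume : Measure (Fin n → ℝ)))
        ext x
        simp only [Set.mem_preimage, Set.mem_ofPred_eq, Set.mem_empty_iff_false, iff_false]
        rintro ⟨⟨h0, hx⟩, hs'⟩
        exact ht ⟨h0, by linarith [Finset.sum_nonneg fun i (_ : i ∈ Finset.univ) => hx i]⟩
    simp_rw [h3]
    rw [lintegral_indicator measurableSet_Icc, ← ofReal_integral_eq_lintegral_ofReal]
    · congr 1
      rw [integral_Icc_eq_integral_Ioc, ← intervalIntegral.integral_of_le hs,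
        intervalIntegral.integral_div,
        intervalIntegral.integral_comp_sub_left (fun t => t ^ n) s]
      simp [Nat.factorial_succ]
      field_simp
    · exact (by fun_prop : Continuous fun t : ℝ => (s - t) ^ n / n.factorial).integrableOn_Icc
    · refine (ae_restrict_iff' measurableSet_Icc).2 (Filter.Eventually.of_forall fun t ht => ?_)
      have : 0 ≤ s - t := by linarith [ht.2]
      simp only [Pi.zero_apply]
      positivity

/-- The matrix whose rows are the edge vectors `x₁ - x₄`, `x₂ - x₄`, `x₃ - x₄`. -/
def edgeMatrix (x₁ x₂ x₃ x₄ : EuclideanSpace ℝ (Fin 3)) : Matrix (Fin 3) (Fin 3) ℝ :=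
  Matrix.of ![(x₁ - x₄).ofLp, (x₂ - x₄).ofLp, (x₃ - x₄).ofLp]

theorem edgeMatrix_mulVec (x₁ x₂ x₃ x₄ z : EuclideanSpace ℝ (Fin 3)) :
    (edgeMatrix x₁ x₂ x₃ x₄).mulVec z.ofLp = ![⟪x₁ - x₄, z⟫, ⟪x₂ - x₄, z⟫, ⟪x₃ - x₄, z⟫] := by
  ext i
  fin_cases i <;>
    simp [edgeMatrix, Matrix.mulVec, dotProduct, PiLp.inner_apply, Fin.sum_univ_three, mul_comm]

/-- The square of the edge determinant is the Gram determinant of the edge vectors. -/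
theorem det_edgeMatrix_sq (x₁ x₂ x₃ x₄ : EuclideanSpace ℝ (Fin 3)) :
    (edgeMatrix x₁ x₂ x₃ x₄).det ^ 2 =
      !![⟪x₁ - x₄, x₁ - x₄⟫, ⟪x₁ - x₄, x₂ - x₄⟫, ⟪x₁ - x₄, x₃ - x₄⟫;
        ⟪x₁ - x₄, x₂ - x₄⟫, ⟪x₂ - x₄, x₂ - x₄⟫, ⟪x₂ - x₄, x₃ - x₄⟫;
        ⟪x₁ - x₄, x₃ - x₄⟫, ⟪x₂ - x₄, x₃ - x₄⟫, ⟪x₃ - x₄, x₃ - x₄⟫].det := by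
  rw [sq]
  nth_rw 2 [← Matrix.det_transpose]
  rw [← Matrix.det_mul]
  congr 1
  ext i j
  fin_cases i <;> fin_cases j <;>
    simp [edgeMatrix, Matrix.mul_apply, PiLp.inner_apply, Fin.sum_univ_three,
      -inner_self_eq_norm_sq_to_K] <;> ring

theorem det_edgeMatrix_ne_zero (x₁ x₂ x₃ x₄ : EuclideanSpace ℝ (Fin 3))
    (h : ¬ Coplanar ℝ ({x₁, x₂, x₃, x₄} : Set (EuclideanSpace ℝ (Fin 3)))) :
    (edgeMatrix x₁ x₂ x₃ x₄).det ≠ 0 := by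
  intro hdet
  apply h
  obtain ⟨v, hv, hv0⟩ := Matrix.exists_mulVec_eq_zero_iff.mpr hdet
  set z : EuclideanSpace ℝ (Fin 3) := WithLp.toLp 2 v with hz
  have hz0 : z ≠ 0 := fun h0 => hv (by simpa [hz] using h0)
  have hM := edgeMatrix_mulVec x₁ x₂ x₃ x₄ z
  rw [show z.ofLp = v from rfl, hv0] at hM
  have h1 := congrFun hM 0
  have h2 := congrFun hM 1
  have h3 := congrFun hM 2
  simp at h1 h2 h3
  rw [coplanar_iff_finrank_le_two]
  have hle : vectorSpan ℝ ({x₁, x₂, x₃, x₄} : Set (EuclideanSpace ℝ (Fin 3))) ≤ (ℝ ∙ z)ᗮ := by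
    rw [vectorSpan_eq_span_vsub_set_right ℝ (p := x₄) (by simp), Submodule.span_le]
    rintro _ ⟨x, hx, rfl⟩
    rw [SetLike.mem_coe, Submodule.mem_orthogonal_singleton_iff_inner_left]
    simp only [Set.mem_insert_iff, Set.mem_singleton_iff] at hx
    rcases hx with rfl | rfl | rfl | rfl
    · exact h1.symm
    · exact h2.symm
    · exact h3.symm
    · simp
  have : Fact (Module.finrank ℝ (EuclideanSpace ℝ (Fin 3)) = 2 + 1) := ⟨by simp⟩
  exact (Submodule.finrank_mono hle).trans
    (Submodule.finrank_orthogonal_span_singleton (n := 2) hz0).le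

/-- Existence of the circumcenter `o` and the squared circumradius `ρ`. -/
theorem exists_equidistant (x₁ x₂ x₃ x₄ : EuclideanSpace ℝ (Fin 3))
    (h : (edgeMatrix x₁ x₂ x₃ x₄).det ≠ 0) :
    ∃ o : EuclideanSpace ℝ (Fin 3), ∃ ρ : ℝ, ‖x₁ - o‖ ^ 2 = ρ ∧ ‖x₂ - o‖ ^ 2 = ρ ∧
      ‖x₃ - o‖ ^ 2 = ρ ∧ ‖x₄ - o‖ ^ 2 = ρ := by
  -- `‖xᵢ - o‖ = ‖x₄ - o‖` is the linear equation `⟪xᵢ - x₄, o⟫ = (‖xᵢ‖² - ‖x₄‖²) / 2`.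
  set b : Fin 3 → ℝ := ![(‖x₁‖ ^ 2 - ‖x₄‖ ^ 2) / 2, (‖x₂‖ ^ 2 - ‖x₄‖ ^ 2) / 2,
    (‖x₃‖ ^ 2 - ‖x₄‖ ^ 2) / 2] with hb
  set o : EuclideanSpace ℝ (Fin 3) :=
    WithLp.toLp 2 ((edgeMatrix x₁ x₂ x₃ x₄)⁻¹.mulVec b)
  have hM := edgeMatrix_mulVec x₁ x₂ x₃ x₄ o
  rw [show o.ofLp = (edgeMatrix x₁ x₂ x₃ x₄)⁻¹.mulVec b from rfl, Matrix.mulVec_mulVec,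
    Matrix.mul_nonsing_inv _ (isUnit_iff_ne_zero.mpr h), Matrix.one_mulVec, hb] at hM
  have h1 := congrFun hM 0
  have h2 := congrFun hM 1
  have h3 := congrFun hM 2
  simp [inner_sub_left] at h1 h2 h3
  refine ⟨o, ‖x₄ - o‖ ^ 2, ?_, ?_, ?_, rfl⟩ <;> simp only [@norm_sub_sq_real] <;> linarith

/-- The tetrahedron is the image of the corner simplex `{t ≥ 0, ∑ tᵢ ≤ 1}` under the affine map
`t ↦ x₄ + ∑ tᵢ (xᵢ - x₄)`, whose linear part has the transposed edge matrix. -/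
theorem volume_tetrahedron (x₁ x₂ x₃ x₄ : EuclideanSpace ℝ (Fin 3)) :
    volume (convexHull ℝ ({x₁, x₂, x₃, x₄} : Set (EuclideanSpace ℝ (Fin 3)))) =
      ENNReal.ofReal (|(edgeMatrix x₁ x₂ x₃ x₄).det| / 6) := by
  set f := Matrix.toEuclideanLin (edgeMatrix x₁ x₂ x₃ x₄).transpose with hf
  have hfa : ∀ t, f t = t 0 • (x₁ - x₄) + t 1 • (x₂ - x₄) + t 2 • (x₃ - x₄) := by
    intro t
    ext i
    simp [hf, edgeMatrix, Matrix.mulVec, dotProduct, Fin.sum_univ_three, mul_comm]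
  set T : Set (EuclideanSpace ℝ (Fin 3)) := {t | (∀ i, 0 ≤ t i) ∧ ∑ i, t i ≤ 1} with hT
  have hTc : Convex ℝ T := by
    rintro s ⟨hs0, hs1⟩ t ⟨ht0, ht1⟩ a b ha hb hab
    refine ⟨fun i => ?_, ?_⟩
    · have := hs0 i
      have := ht0 i
      simp only [PiLp.add_apply, PiLp.smul_apply, smul_eq_mul]
      positivity
    · simp only [PiLp.add_apply, PiLp.smul_apply, smul_eq_mul, Finset.sum_add_distrib,
        ← Finset.mul_sum]
      nlinarith
  have hhull : convexHull ℝ ({x₁, x₂, x₃, x₄} : Set (EuclideanSpace ℝ (Fin 3))) =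
      (fun y => x₄ + y) '' (f '' T) := by
    apply Set.Subset.antisymm
    · refine convexHull_min ?_ ((hTc.linear_image f).translate x₄)
      have hmem : ∀ t ∈ T, x₄ + f t ∈ (fun y => x₄ + y) '' (f '' T) := fun t ht =>
        ⟨f t, ⟨t, ht, rfl⟩, rfl⟩
      intro x hx
      simp only [Set.mem_insert_iff, Set.mem_singleton_iff] at hx
      rcases hx with rfl | rfl | rfl | rfl
      · have := hmem !₂[1, 0, 0] (by simp [hT, Fin.forall_fin_succ, Fin.sum_univ_three])
        simpa [hfa] using this
      · have := hmem !₂[0, 1, 0] (by simp [hT, Fin.forall_fin_succ, Fin.sum_univ_three])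
        simpa [hfa] using this
      · have := hmem !₂[0, 0, 1] (by simp [hT, Fin.forall_fin_succ, Fin.sum_univ_three])
        simpa [hfa] using this
      · have := hmem 0 (by simp [hT])
        simpa using this
    · rintro _ ⟨_, ⟨t, ⟨ht0, ht1⟩, rfl⟩, rfl⟩
      rw [Fin.sum_univ_three] at ht1
      have := (convex_convexHull ℝ
        ({x₁, x₂, x₃, x₄} : Set (EuclideanSpace ℝ (Fin 3)))).sum_mem
        (t := Finset.univ) (w := ![t 0, t 1, t 2, 1 - (t 0 + t 1 + t 2)])
        (z := ![x₁, x₂, x₃, x₄])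
        (by
          have h0 := ht0 0
          have h1 := ht0 1
          have h2 := ht0 2
          intro i _
          fin_cases i
          exacts [h0, h1, h2, sub_nonneg.mpr ht1])
        (by simp [Fin.sum_univ_four])
        (by
          intro i _
          apply subset_convexHull
          fin_cases i <;> simp)
      convert this using 1
      simp [Fin.sum_univ_four, hfa]
      module
  have hTv : volume T = ENNReal.ofReal (1 / 6) := by
    have := volume_corner 3 1 zero_le_one
    rw [← (PiLp.volume_preserving_toLp (Fin 3)).measure_preimage_emb
      (MeasurableEquiv.toLp 2 _).measurableEmbedding]
    convert this using 2
    · rfl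
    · norm_num [Nat.factorial]
  rw [hhull, Set.image_add_left, measure_preimage_add, Measure.addHaar_image_linearMap, hTv, hf,
    Matrix.toEuclideanLin, Matrix.toLpLin_eq_toLin, LinearMap.det_toLin, Matrix.det_transpose,
    ← ENNReal.ofReal_mul (abs_nonneg _)]
  congr 1
  ring

/-- Crelle's formula, with the triangle area eliminated by Heron's formula; `ρ` is the squared
circumradius and the determinant is six times the signed volume. -/
theorem crelle {x₁ x₂ x₃ x₄ o : EuclideanSpace ℝ (Fin 3)} {ρ : ℝ} (h1 : ‖x₁ - o‖ ^ 2 = ρ)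
    (h2 : ‖x₂ - o‖ ^ 2 = ρ) (h3 : ‖x₃ - o‖ ^ 2 = ρ) (h4 : ‖x₄ - o‖ ^ 2 = ρ) :
    (dist x₁ x₂ * dist x₃ x₄ + dist x₁ x₃ * dist x₂ x₄ + dist x₁ x₄ * dist x₂ x₃) *
      d3 (dist x₁ x₂ * dist x₃ x₄) (dist x₁ x₃ * dist x₂ x₄) (dist x₁ x₄ * dist x₂ x₃) =
    16 * ρ * (edgeMatrix x₁ x₂ x₃ x₄).det ^ 2 := by
  have hd : ∀ x y : EuclideanSpace ℝ (Fin 3), ‖x - o‖ ^ 2 = ρ → ‖y - o‖ ^ 2 = ρ →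
      dist x y ^ 2 = 2 * ρ - 2 * ⟪x - o, y - o⟫ := by
    intro x y hx hy
    rw [dist_eq_norm, ← sub_sub_sub_cancel_right x y o, norm_sub_sq_real, hx, hy]
    ring
  have hin : ∀ x y : EuclideanSpace ℝ (Fin 3),
      ⟪x - x₄, y - x₄⟫ = (dist x x₄ ^ 2 + dist y x₄ ^ 2 - dist x y ^ 2) / 2 := by
    intro x y
    rw [dist_eq_norm, dist_eq_norm, dist_eq_norm, ← sub_sub_sub_cancel_right x y x₄,
      norm_sub_sq_real (x - x₄)]
    ring
  have hdot : ∀ x y : EuclideanSpace ℝ (Fin 3),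
      ⟪x - o, y - o⟫ = (x - o).ofLp ⬝ᵥ (y - o).ofLp := by
    intro x y
    simp only [PiLp.inner_apply, dotProduct, RCLike.inner_apply, conj_trivial, mul_comm]
  have hg := gram_four_eq_zero ![(x₁ - o).ofLp, (x₂ - o).ofLp, (x₃ - o).ofLp, (x₄ - o).ofLp]
  have key := crelle_gram ρ ⟪x₁ - o, x₂ - o⟫ ⟪x₁ - o, x₃ - o⟫ ⟪x₁ - o, x₄ - o⟫ ⟪x₂ - o, x₃ - o⟫
    ⟪x₂ - o, x₄ - o⟫ ⟪x₃ - o, x₄ - o⟫ (by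
      rw [← hg]
      congr 1
      rw [← real_inner_self_eq_norm_sq, hdot] at h1 h2 h3 h4
      ext i j
      fin_cases i <;> fin_cases j <;>
        first
        | exact h1.symm
        | exact h2.symm
        | exact h3.symm
        | exact h4.symm
        | exact hdot _ _
        | exact (hdot _ _).trans (dotProduct_comm _ _))
    _ _ _ _ _ _ (hd _ _ h1 h2) (hd _ _ h1 h3) (hd _ _ h1 h4) (hd _ _ h2 h3) (hd _ _ h2 h4)
    (hd _ _ h3 h4)
  rw [det_edgeMatrix_sq]
  simp only [hin, dist_self]
  convert key using 1
  · unfold d3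
    ring
  · congr 3
    ext i j
    fin_cases i <;> fin_cases j <;> simp

/-- Leibniz's relation between the squared edges, the circumradius and the distance from the
circumcenter to the centroid. -/
theorem sum_sq_eq {x₁ x₂ x₃ x₄ o : EuclideanSpace ℝ (Fin 3)} {ρ : ℝ} (h1 : ‖x₁ - o‖ ^ 2 = ρ)
    (h2 : ‖x₂ - o‖ ^ 2 = ρ) (h3 : ‖x₃ - o‖ ^ 2 = ρ) (h4 : ‖x₄ - o‖ ^ 2 = ρ) :
    ‖(x₁ - o) + (x₂ - o) + (x₃ - o) + (x₄ - o)‖ ^ 2 = 16 * ρ - (dist x₁ x₂ ^ 2 + dist x₁ x₃ ^ 2 +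
      dist x₁ x₄ ^ 2 + dist x₂ x₃ ^ 2 + dist x₂ x₄ ^ 2 + dist x₃ x₄ ^ 2) := by
  have hd : ∀ x y : EuclideanSpace ℝ (Fin 3),
      dist x y ^ 2 = ‖x - o‖ ^ 2 + ‖y - o‖ ^ 2 - 2 * ⟪x - o, y - o⟫ := by
    intro x y
    rw [dist_eq_norm, ← sub_sub_sub_cancel_right x y o, norm_sub_sq_real]
    ring
  simp only [hd, norm_add_sq_real, inner_add_left, h1, h2, h3, h4]
  ring

/-- In an isosceles tetrahedron the circumcenter is the centroid: the Gram matrix of the `xᵢ - o` has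
equal row sums, so `∑ (xᵢ - o)` is orthogonal to every edge. -/
theorem sum_eq_zero_of_isosceles {x₁ x₂ x₃ x₄ o : EuclideanSpace ℝ (Fin 3)} {ρ : ℝ}
    (h1 : ‖x₁ - o‖ ^ 2 = ρ) (h2 : ‖x₂ - o‖ ^ 2 = ρ) (h3 : ‖x₃ - o‖ ^ 2 = ρ)
    (h4 : ‖x₄ - o‖ ^ 2 = ρ) (hdet : (edgeMatrix x₁ x₂ x₃ x₄).det ≠ 0)
    (ha : dist x₁ x₂ = dist x₃ x₄) (hb : dist x₁ x₃ = dist x₂ x₄)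
    (hc : dist x₁ x₄ = dist x₂ x₃) :
    (x₁ - o) + (x₂ - o) + (x₃ - o) + (x₄ - o) = 0 := by
  have hd : ∀ x y : EuclideanSpace ℝ (Fin 3),
      dist x y ^ 2 = ‖x - o‖ ^ 2 + ‖y - o‖ ^ 2 - 2 * ⟪x - o, y - o⟫ := by
    intro x y
    rw [dist_eq_norm, ← sub_sub_sub_cancel_right x y o, norm_sub_sq_real]
    ring
  have ha' := congrArg (· ^ 2) ha
  have hb' := congrArg (· ^ 2) hb
  have hc' := congrArg (· ^ 2) hc
  simp only [hd, h1, h2, h3, h4] at ha' hb' hc'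
  set S := (x₁ - o) + (x₂ - o) + (x₃ - o) + (x₄ - o) with hS
  have hM := edgeMatrix_mulVec x₁ x₂ x₃ x₄ S
  have c21 := real_inner_comm (x₁ - o) (x₂ - o)
  have c31 := real_inner_comm (x₁ - o) (x₃ - o)
  have c41 := real_inner_comm (x₁ - o) (x₄ - o)
  have c32 := real_inner_comm (x₂ - o) (x₃ - o)
  have c42 := real_inner_comm (x₂ - o) (x₄ - o)
  have c43 := real_inner_comm (x₃ - o) (x₄ - o)
  have e : ∀ x, ⟪x - o, S⟫ = ⟪x₄ - o, S⟫ → ⟪x - x₄, S⟫ = 0 := by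
    intro x hx
    rw [← sub_sub_sub_cancel_right x x₄ o, inner_sub_left, hx, sub_self]
  have i1 : ⟪x₁ - x₄, S⟫ = 0 := e _ (by
    simp only [hS, inner_add_right, real_inner_self_eq_norm_sq, h1, h4]; linarith)
  have i2 : ⟪x₂ - x₄, S⟫ = 0 := e _ (by
    simp only [hS, inner_add_right, real_inner_self_eq_norm_sq, h2, h4]; linarith)
  have i3 : ⟪x₃ - x₄, S⟫ = 0 := e _ (by
    simp only [hS, inner_add_right, real_inner_self_eq_norm_sq, h3, h4]; linarith)
  rw [i1, i2, i3] at hM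
  have := Matrix.eq_zero_of_mulVec_eq_zero hdet
    (hM.trans (by ext i; fin_cases i <;> rfl))
  ext i
  exact congrFun this i

/-- For a nondegenerate tetrahedron with vertices `x₁, x₂, x₃, x₄` and volume `V`,
`288·V² ≤ 4·d₃(r₁₂·r₃₄, r₁₃·r₂₄, r₁₄·r₂₃)`, with equality iff the tetrahedron is
isosceles (opposite edges have equal lengths). -/
theorem volume_le_d3_crelle (x₁ x₂ x₃ x₄ : EuclideanSpace ℝ (Fin 3))
    (h : ¬ Coplanar ℝ ({x₁, x₂, x₃, x₄} : Set (EuclideanSpace ℝ (Fin 3))))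
    (V : ℝ)
    (hV : V = (MeasureTheory.volume (convexHull ℝ ({x₁, x₂, x₃, x₄} : Set (EuclideanSpace ℝ (Fin 3))))).toReal) :
    288 * V ^ 2 ≤
      4 * d3 (dist x₁ x₂ * dist x₃ x₄) (dist x₁ x₃ * dist x₂ x₄) (dist x₁ x₄ * dist x₂ x₃) ∧
    (288 * V ^ 2 =
        4 * d3 (dist x₁ x₂ * dist x₃ x₄) (dist x₁ x₃ * dist x₂ x₄) (dist x₁ x₄ * dist x₂ x₃) ↔
      dist x₁ x₂ = dist x₃ x₄ ∧ dist x₁ x₃ = dist x₂ x₄ ∧ dist x₁ x₄ = dist x₂ x₃) := by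
  have hdet := det_edgeMatrix_ne_zero x₁ x₂ x₃ x₄ h
  obtain ⟨o, ρ, h1, h2, h3, h4⟩ := exists_equidistant x₁ x₂ x₃ x₄ hdet
  have hcr := crelle h1 h2 h3 h4
  have hS := sum_sq_eq h1 h2 h3 h4
  have hiso := sum_eq_zero_of_isosceles h1 h2 h3 h4 hdet
  rw [volume_tetrahedron, ENNReal.toReal_ofReal (by positivity)] at hV
  have hV2 : 288 * V ^ 2 = 8 * (edgeMatrix x₁ x₂ x₃ x₄).det ^ 2 := by
    rw [hV, div_pow, sq_abs]
    ring
  rw [hV2]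
  have hD : 0 < (edgeMatrix x₁ x₂ x₃ x₄).det ^ 2 := by positivity
  generalize (edgeMatrix x₁ x₂ x₃ x₄).det ^ 2 = D at hcr hD
  generalize (x₁ - o) + (x₂ - o) + (x₃ - o) + (x₄ - o) = S at hS hiso
  have hp : 0 < dist x₁ x₂ * dist x₃ x₄ + dist x₁ x₃ * dist x₂ x₄ + dist x₁ x₄ * dist x₂ x₃ := by
    have h14 : x₁ ≠ x₄ := by
      rintro rfl
      exact hdet (Matrix.det_eq_zero_of_row_eq_zero 0 (by simp [edgeMatrix]))
    have h23 : x₂ ≠ x₃ := by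
      rintro rfl
      exact hdet (Matrix.det_zero_of_row_eq (i := 1) (j := 2) (by decide) rfl)
    have := dist_pos.mpr h14
    have := dist_pos.mpr h23
    positivity
  generalize dist x₁ x₂ = a at *
  generalize dist x₁ x₃ = b at *
  generalize dist x₁ x₄ = c at *
  generalize dist x₂ x₃ = c' at *
  generalize dist x₂ x₄ = b' at *
  generalize dist x₃ x₄ = a' at *
  generalize hG : d3 (a * a') (b * b') (c * c') = G at *
  have hgap : 8 * ρ - (a * a' + b * b' + c * c') =
      (‖S‖ ^ 2 + (a - a') ^ 2 + (b - b') ^ 2 + (c - c') ^ 2) / 2 := by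
    linear_combination (-1 / 2) * hS
  have hmul : (a * a' + b * b' + c * c') * (4 * G - 8 * D) =
      4 * D * (‖S‖ ^ 2 + (a - a') ^ 2 + (b - b') ^ 2 + (c - c') ^ 2) := by
    linear_combination 4 * hcr + 8 * D * hgap
  refine ⟨?_, ?_, ?_⟩
  · have : 0 ≤ 4 * G - 8 * D := nonneg_of_mul_nonneg_right (hmul ▸ by positivity) hp
    linarith
  · intro heq
    have h0 : ‖S‖ ^ 2 + (a - a') ^ 2 + (b - b') ^ 2 + (c - c') ^ 2 = 0 := by
      have : 4 * D * (‖S‖ ^ 2 + (a - a') ^ 2 + (b - b') ^ 2 + (c - c') ^ 2) = 0 := by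
        rw [← hmul, heq, sub_self, mul_zero]
      exact (mul_eq_zero.mp this).resolve_left (by positivity)
    have := sq_nonneg ‖S‖
    have := sq_nonneg (a - a')
    have := sq_nonneg (b - b')
    have := sq_nonneg (c - c')
    refine ⟨?_, ?_, ?_⟩ <;> refine sub_eq_zero.mp (pow_eq_zero_iff two_ne_zero |>.mp ?_) <;>
      linarith
  · rintro ⟨ha, hb, hc⟩
    have hS0 := hiso ha hb hc
    rw [hS0, ha, hb, hc] at hmul
    simp only [norm_zero, sub_self] at hmul
    have h0 : 4 * G - 8 * D = 0 := by
      refine (mul_eq_zero.mp (hmul.trans (by ring))).resolve_left ?_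
      rw [ha, hb, hc] at hp
      exact hp.ne'
    linarith
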